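/- Let n ≥ 3 and 1 ≤ k ≤ n−1 be integers, and let G be a simple connected graph on n vertices with edge connectivity κ′(G) ≤ k. Then Π2(G) ≤ k^k · (n−1)^{k(n−1)} · (n−2)^{(n−2)(n−k−1)}, with equality if and only if G is isomorphic to K_n^k. -/

import Mathlib

open SimpleGraph Finset

/-- Degree of a vertex (as `Nat.card` of its neighbor set). -/
noncomputable def mdeg {V : Type*} (G : SimpleGraph V) (v : V) : ℕ :=
  Nat.card (G.neighborSet v)

/-- First multiplicative Zagreb index. -/
noncomputable def mZ1 {V : Type*} [Fintype V] (G : SimpleGraph V) : ℕ :=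
  ∏ v : V, (mdeg G v) ^ 2

/-- Second multiplicative Zagreb index. -/
noncomputable def mZ2 {V : Type*} [Fintype V] (G : SimpleGraph V) : ℕ :=
  ∏ v : V, (mdeg G v) ^ (mdeg G v)

/-- The edge connectivity of `G` is at most `k`: some set of at most `k` edges of `G`
disconnects it. -/
def EdgeConnAtMost {V : Type*} (G : SimpleGraph V) (k : ℕ) : Prop :=
  ∃ F : Finset (Sym2 V), (↑F : Set (Sym2 V)) ⊆ G.edgeSet ∧ F.card ≤ k ∧
    ¬ (G.deleteEdges (↑F : Set (Sym2 V))).Connected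

/-- The graph `K_n^k`: vertex `0` is joined to the first `k` vertices of the complete
graph on the remaining `n - 1` vertices. -/
def KnK (n k : ℕ) : SimpleGraph (Fin n) :=
  SimpleGraph.fromRel (fun u v => (u.val ≠ 0 ∧ v.val ≠ 0) ∨ (u.val = 0 ∧ 1 ≤ v.val ∧ v.val ≤ k))

/-!
Adding an edge with an endpoint of final degree at least `2` strictly increases `mZ2`; an edge
joining two isolated vertices leaves it unchanged, since `0 ^ 0 = 1 ^ 1`, but for `3 ≤ n`
and `1 ≤ k` no edge of `KnK n k` has both endpoints of degree `1`.

If `G` has a vertex `v` of degree at most `k`, then numbering `v` by `0` and its neighbours by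
numbers up to `k` embeds `G` as a spanning subgraph of `KnK n k`, and monotonicity gives the bound
together with its equality case. Otherwise all degrees exceed `k`. The vertices on a side `S` of a
cut with at most `k` edges then satisfy `#S * (k + 1) ≤ k + #S * (#S - 1)`, so each side has at
least `k + 2` vertices. Hence all degrees are at most `n - 3`, and `G` stays below the value
`(n - 2) ^ ((n - 2) * (n - 1))` attained by the proper subgraph `KnK n 0` of `KnK n k`.
-/

lemma mdeg_eq_degree {V : Type*} (G : SimpleGraph V) (v : V) [Fintype (G.neighborSet v)] :
    mdeg G v = G.degree v := by
  rw [mdeg, Nat.card_eq_fintype_card, card_neighborSet_eq_degree]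

section Monotonicity

lemma pow_self_le_pow_self {d e : ℕ} (h : d ≤ e) : d ^ d ≤ e ^ e := by
  rcases e.eq_zero_or_pos with rfl | he
  · rw [Nat.le_zero.1 h]
  · exact (Nat.pow_le_pow_left h d).trans (Nat.pow_le_pow_right he h)

lemma pow_self_lt_pow_self {d e : ℕ} (h : d < e) (he : 1 < e) : d ^ d < e ^ e :=
  (Nat.pow_le_pow_left h.le d).trans_lt (Nat.pow_lt_pow_right he h)

variable {V W : Type*} {G H : SimpleGraph V}

lemma mdeg_mono [Finite V] (hGH : G ≤ H) (v : V) : mdeg G v ≤ mdeg H v :=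
  Nat.card_mono (Set.toFinite _) fun _ hw => hGH hw

lemma mdeg_lt_mdeg [Finite V] (hGH : G ≤ H) {x y : V} (hG : ¬ G.Adj x y) (hH : H.Adj x y) :
    mdeg G x < mdeg H x :=
  Set.ncard_lt_ncard ⟨fun _ hw => hGH hw, fun h => hG (h hH)⟩

variable [Fintype V]

lemma mZ2_lt_mZ2 (hGH : G ≤ H) {x y : V} (hG : ¬ G.Adj x y) (hH : H.Adj x y)
    (hx : 1 < mdeg H x) : mZ2 G < mZ2 H :=
  prod_lt_prod (fun _ _ => Nat.pow_self_pos) (fun v _ => pow_self_le_pow_self (mdeg_mono hGH v))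
    ⟨x, mem_univ x, pow_self_lt_pow_self (mdeg_lt_mdeg hGH hG hH) hx⟩

lemma mZ2_congr [Fintype W] {K : SimpleGraph W} (φ : G ≃g K) : mZ2 G = mZ2 K :=
  Fintype.prod_equiv φ.toEquiv _ _ fun v => by
    have hdeg : mdeg G v = mdeg K (φ v) := Nat.card_congr (φ.mapNeighborSet v)
    exact congrArg (fun d => d ^ d) hdeg

end Monotonicity

section KnK

variable {m n k : ℕ}

lemma KnK_adj_zero_succ (j : Fin m) : (KnK (m + 1) k).Adj 0 j.succ ↔ j.val < k := by
  rw [KnK, fromRel_adj, Ne, Fin.ext_iff, Fin.val_zero, Fin.val_succ]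
  omega

lemma KnK_adj_succ_succ (i j : Fin m) : (KnK (m + 1) k).Adj i.succ j.succ ↔ i ≠ j := by
  rw [KnK, fromRel_adj, (Fin.succ_injective m).ne_iff]
  exact and_iff_left (.inl (.inl ⟨Nat.succ_ne_zero _, Nat.succ_ne_zero _⟩))

lemma KnK_mono {l : ℕ} (hkl : k ≤ l) : KnK n k ≤ KnK n l := by
  intro u v
  simp only [KnK, fromRel_adj]
  omega

lemma mdeg_KnK_zero (hk : k ≤ m) : mdeg (KnK (m + 1) k) 0 = k := by
  classical
  rw [mdeg_eq_degree, ← card_neighborFinset_eq_degree, neighborFinset_eq_filter,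
    Fin.card_filter_univ_succ, if_neg (KnK _ k).irrefl]
  simp only [KnK_adj_zero_succ, Fin.card_filter_val_lt, min_eq_right hk]

lemma mdeg_KnK_succ (i : Fin m) :
    mdeg (KnK (m + 1) k) i.succ = if i.val < k then m else m - 1 := by
  classical
  have hpos := i.pos
  have hcard : #{j : Fin m | i ≠ j} = m - 1 := by simp [filter_ne]
  rw [mdeg_eq_degree, ← card_neighborFinset_eq_degree, neighborFinset_eq_filter,
    Fin.card_filter_univ_succ]
  simp only [adj_comm _ i.succ 0, KnK_adj_zero_succ, KnK_adj_succ_succ, hcard]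
  split_ifs <;> omega

lemma mZ2_KnK (hk : k < n) :
    mZ2 (KnK n k) = k ^ k * (n - 1) ^ (k * (n - 1)) * (n - 2) ^ ((n - 2) * (n - k - 1)) := by
  obtain ⟨m, rfl⟩ := Nat.exists_eq_add_one.2 (Nat.zero_lt_of_lt hk)
  have hkm : k ≤ m := Nat.le_of_lt_succ hk
  have hlow : #{i : Fin m | i.val < k} = k := by rw [Fin.card_filter_val_lt, min_eq_right hkm]
  have hhigh : #{i : Fin m | ¬ i.val < k} = m - k := by
    rw [filter_not, card_sdiff_of_subset (filter_subset _ _), hlow, card_fin]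
  calc mZ2 (KnK (m + 1) k)
      = k ^ k * ∏ i : Fin m, if i.val < k then m ^ m else (m - 1) ^ (m - 1) := by
        rw [mZ2, Fin.prod_univ_succ, mdeg_KnK_zero hkm]
        congr! 2 with i
        rw [mdeg_KnK_succ]
        split_ifs <;> rfl
    _ = k ^ k * ((m ^ m) ^ k * ((m - 1) ^ (m - 1)) ^ (m - k)) := by
        rw [prod_ite, prod_const, prod_const, hlow, hhigh]
    _ = _ := by
        rw [← pow_mul, ← pow_mul, mul_comm m k, ← mul_assoc, Nat.sub_right_comm,
          Nat.add_sub_cancel, Nat.add_sub_add_right m 1 1]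

lemma one_lt_mdeg_KnK_or (hn : 3 ≤ n) (hk : 1 ≤ k) {x y : Fin n} (h : (KnK n k).Adj x y) :
    1 < mdeg (KnK n k) x ∨ 1 < mdeg (KnK n k) y := by
  obtain ⟨m, rfl⟩ := Nat.exists_eq_add_of_le' (by omega : 1 ≤ n)
  induction x using Fin.cases with
  | zero =>
    induction y using Fin.cases with
    | zero => exact absurd h (KnK _ k).irrefl
    | succ j =>
      rw [KnK_adj_zero_succ] at h
      rw [mdeg_KnK_succ, if_pos h]
      omega
  | succ i =>
    induction y using Fin.cases with
    | zero =>
      rw [adj_comm, KnK_adj_zero_succ] at h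
      rw [mdeg_KnK_succ, if_pos h]
      omega
    | succ j =>
      rw [KnK_adj_succ_succ, Ne, Fin.ext_iff] at h
      rw [mdeg_KnK_succ, mdeg_KnK_succ]
      split_ifs <;> omega

lemma mZ2_lt_mZ2_KnK (hn : 3 ≤ n) (hk : 1 ≤ k) {G : SimpleGraph (Fin n)} (hG : G < KnK n k) :
    mZ2 G < mZ2 (KnK n k) := by
  obtain ⟨x, y, hK, hxy⟩ : ∃ x y, (KnK n k).Adj x y ∧ ¬ G.Adj x y := by
    simpa only [le_iff_adj, not_forall, exists_prop] using hG.not_ge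
  rcases one_lt_mdeg_KnK_or hn hk hK with hx | hy
  · exact mZ2_lt_mZ2 hG.le hxy hK hx
  · exact mZ2_lt_mZ2 hG.le (mt Adj.symm hxy) hK.symm hy

lemma KnK_zero_lt_KnK (hn : 2 ≤ n) (hk : 1 ≤ k) : KnK n 0 < KnK n k := by
  obtain ⟨m, rfl⟩ := Nat.exists_eq_add_of_le' hn
  refine lt_of_le_not_ge (KnK_mono (Nat.zero_le k)) fun hle => ?_
  have hadj : (KnK (m + 2) k).Adj 0 (0 : Fin (m + 1)).succ := (KnK_adj_zero_succ 0).2 hk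
  exact Nat.not_lt_zero _ ((KnK_adj_zero_succ 0).1 (hle hadj))

end KnK

section Embedding

variable {V : Type*} [Fintype V] {n k : ℕ} {G : SimpleGraph V} {v : V}

lemma exists_equiv_fin_succ_apply_eq_zero_and_le (hV : Fintype.card V = n + 1) (hk : k ≤ n)
    (hv : mdeg G v ≤ k) :
    ∃ e : V ≃ Fin (n + 1), e v = 0 ∧ ∀ w, G.Adj v w → (e w).val ≤ k := by
  classical
  obtain ⟨f⟩ : Nonempty (G.neighborFinset v ↪ Fin k) :=
    Function.Embedding.nonempty_of_card_le (by
      rwa [Fintype.card_coe, card_neighborFinset_eq_degree, ← mdeg_eq_degree, Fintype.card_fin])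
  let g : V → Fin (n + 1) := fun w =>
    if hw : w ∈ G.neighborFinset v then ((f ⟨w, hw⟩).castLE hk).succ else 0
  have hgv : g v = 0 := dif_neg (G.notMem_neighborFinset_self v)
  have hgw : ∀ w (hw : w ∈ G.neighborFinset v), g w = ((f ⟨w, hw⟩).castLE hk).succ :=
    fun w hw => dif_pos hw
  have hg : Set.InjOn g (insert v (G.neighborFinset v) : Finset V) := by
    rw [coe_insert, Set.injOn_insert (by simp)]
    constructor
    · intro x hx y hy hxy
      rw [hgw x hx, hgw y hy] at hxy
      simpa using hxy
    · rintro ⟨w, hw, hwv⟩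
      rw [hgw w hw, hgv] at hwv
      exact Fin.succ_ne_zero _ hwv
  obtain ⟨e, he⟩ := exists_equiv_extend_of_card_eq (t := univ) (by simpa using hV)
    (subset_univ _) hg
  refine ⟨e.trans (Equiv.subtypeUnivEquiv mem_univ), ?_, fun w hw => ?_⟩
  · exact (he v (mem_insert_self _ _)).trans hgv
  · have hwN : w ∈ G.neighborFinset v := (G.mem_neighborFinset v w).2 hw
    have hew : (e w : Fin (n + 1)) = ((f ⟨w, hwN⟩).castLE hk).succ :=
      (he w (mem_insert_of_mem hwN)).trans (hgw w hwN)
    rw [Equiv.trans_apply, Equiv.subtypeUnivEquiv_apply, hew]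
    exact (f ⟨w, hwN⟩).isLt

lemma exists_equiv_map_le_KnK (hV : Fintype.card V = n) (hk : k < n) (hv : mdeg G v ≤ k) :
    ∃ e : V ≃ Fin n, G.map e ≤ KnK n k := by
  obtain ⟨m, rfl⟩ := Nat.exists_eq_add_one.2 (Nat.zero_lt_of_lt hk)
  obtain ⟨e, hev, hek⟩ := exists_equiv_fin_succ_apply_eq_zero_and_le hV (Nat.le_of_lt_succ hk) hv
  have hzero : ∀ w, (e w).val = 0 → w = v := fun w hw =>
    e.injective ((Fin.ext hw).trans hev.symm)
  refine ⟨e, (map_le_iff_le_comap e.toEmbedding G _).2 fun x y hxy => ?_⟩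
  have hne : e x ≠ e y := e.injective.ne hxy.ne
  have hx : (e x).val = 0 → (e y).val ≤ k := fun h => hek y (hzero x h ▸ hxy)
  have hy : (e y).val = 0 → (e x).val ≤ k := fun h => hek x (hzero y h ▸ hxy.symm)
  rw [Ne, Fin.ext_iff] at hne
  simp only [Equiv.coe_toEmbedding, comap_adj, KnK, fromRel_adj, ne_eq, Fin.ext_iff]
  omega

end Embedding

section Cut

variable {V : Type*} {G : SimpleGraph V} {k : ℕ}

lemma EdgeConnAtMost.exists_ncard_edgeSet_between_le [Nonempty V] (h : EdgeConnAtMost G k) :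
    ∃ S : Set V, S.Nonempty ∧ Sᶜ.Nonempty ∧ (G.between S Sᶜ).edgeSet.ncard ≤ k := by
  obtain ⟨F, -, hFk, hF⟩ := h
  obtain ⟨u, v, huv⟩ : ∃ u v, ¬ (G.deleteEdges (F : Set (Sym2 V))).Reachable u v := by
    by_contra! hcon
    exact hF ⟨hcon⟩
  let S : Set V := {w | (G.deleteEdges (F : Set (Sym2 V))).Reachable u w}
  have hcut : ∀ x ∈ S, ∀ y ∈ Sᶜ, G.Adj x y → s(x, y) ∈ F := fun x hx y hy hxy => by
    by_contra hmem
    exact hy (hx.trans (Adj.reachable (deleteEdges_adj.2 ⟨hxy, hmem⟩)))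
  have hsub : (G.between S Sᶜ).edgeSet ⊆ F := by
    refine Sym2.ind fun x y hxy => ?_
    rcases hxy with ⟨hadj, ⟨hx, hy⟩ | ⟨hx, hy⟩⟩
    · exact hcut x hx y hy hadj
    · rw [Sym2.eq_swap]
      exact hcut y hy x hx hadj.symm
  refine ⟨S, ⟨u, .refl u⟩, ⟨v, huv⟩, ?_⟩
  exact (Set.ncard_le_ncard hsub F.finite_toSet).trans ((Set.ncard_coe_finset F).trans_le hFk)

variable [Fintype V] [DecidableRel G.Adj] {S : Finset V}

lemma degree_add_one_le_degree_between_add_card [DecidableEq V] {v : V} (hv : v ∈ S) :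
    G.degree v + 1 ≤ (G.between S Sᶜ).degree v + #S := by
  have hsub : insert v (G.neighborFinset v) ⊆ (G.between S Sᶜ).neighborFinset v ∪ S :=
    insert_subset (mem_union_right _ hv) (G.neighborFinset_subset_between_union hv)
  calc G.degree v + 1 = #(insert v (G.neighborFinset v)) := by
        rw [card_insert_of_notMem (G.notMem_neighborFinset_self v), card_neighborFinset_eq_degree]
    _ ≤ _ := (card_le_card hsub).trans (card_union_le _ _)

lemma sum_degree_between_compl [DecidableEq V] :
    ∑ v ∈ S, (G.between S Sᶜ).degree v = (G.between S Sᶜ).edgeSet.ncard := by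
  rw [Set.ncard_eq_toFinset_card', ← edgeFinset]
  exact isBipartiteWith_sum_degrees_eq_card_edges (t := Sᶜ) (by
    rw [coe_compl]
    exact between_isBipartiteWith disjoint_compl_right)

lemma add_two_le_card_of_forall_lt_degree (hS : S.Nonempty) (hδ : ∀ v ∈ S, k < G.degree v)
    (hcut : (G.between S Sᶜ).edgeSet.ncard ≤ k) : k + 2 ≤ #S := by
  classical
  have hsum : #S * (k + 2) ≤ k + #S * #S :=
    calc #S * (k + 2) = ∑ v ∈ S, (k + 2) := by rw [sum_const, smul_eq_mul]
      _ ≤ ∑ v ∈ S, ((G.between S Sᶜ).degree v + #S) := sum_le_sum fun v hv =>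
          (Nat.add_le_add_right (hδ v hv) 1).trans (degree_add_one_le_degree_between_add_card hv)
      _ = (G.between S Sᶜ).edgeSet.ncard + #S * #S := by
          rw [sum_add_distrib, sum_degree_between_compl, sum_const, smul_eq_mul]
      _ ≤ k + #S * #S := Nat.add_le_add_right hcut _
  by_contra! hlt
  have hprod : 0 ≤ ((#S : ℤ) - 1) * (k + 1 - #S) :=
    mul_nonneg (by have := hS.card_pos; omega) (by omega)
  zify at hsum
  linarith

lemma degree_add_three_le_card_of_mem [DecidableEq V] {v : V} (hv : v ∈ S)
    (hSc : Sᶜ.Nonempty) (hδ : ∀ v, k < G.degree v) (hcut : (G.between S Sᶜ).edgeSet.ncard ≤ k) :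
    G.degree v + 3 ≤ Fintype.card V := by
  have hswap : G.between (Sᶜ : Finset V) ((Sᶜ : Finset V) : Set V)ᶜ = G.between S Sᶜ := by
    rw [coe_compl, compl_compl, between_comm]
  have hlarge : k + 2 ≤ #Sᶜ := add_two_le_card_of_forall_lt_degree hSc (fun w _ => hδ w) (by
    rwa [hswap])
  have hcross : (G.between S Sᶜ).degree v ≤ k := by
    rw [← sum_degree_between_compl] at hcut
    exact (single_le_sum (fun _ _ => Nat.zero_le _) hv).trans hcut
  have hdeg := degree_add_one_le_degree_between_add_card (G := G) hv
  have hcard := card_add_card_compl S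
  omega

end Cut

section Bound

variable {V : Type*} [Fintype V] {G : SimpleGraph V} {n k : ℕ}

lemma EdgeConnAtMost.exists_mdeg_le_or_forall_mdeg_add_three_le [Nonempty V]
    (h : EdgeConnAtMost G k) :
    (∃ v, mdeg G v ≤ k) ∨ ∀ v, mdeg G v + 3 ≤ Fintype.card V := by
  classical
  refine or_iff_not_imp_left.2 fun hδ v => ?_
  simp only [mdeg_eq_degree, not_exists, not_le] at hδ ⊢
  obtain ⟨S, hS, hSc, hcut⟩ := h.exists_ncard_edgeSet_between_le
  lift S to Finset V using S.toFinite
  rw [← coe_compl, coe_nonempty] at hSc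
  rw [coe_nonempty] at hS
  by_cases hv : v ∈ S
  · exact degree_add_three_le_card_of_mem hv hSc hδ hcut
  · refine degree_add_three_le_card_of_mem (mem_compl.2 hv) (by rwa [compl_compl]) hδ ?_
    rwa [coe_compl, compl_compl, between_comm]

lemma mZ2_le_mZ2_KnK_zero (hV : Fintype.card V = n) (hn : 3 ≤ n) (hdeg : ∀ v, mdeg G v + 3 ≤ n) :
    mZ2 G ≤ mZ2 (KnK n 0) := by
  have hexp : (n - 3) * n ≤ (n - 2) * (n - 1) := by
    obtain ⟨m, rfl⟩ := Nat.exists_eq_add_of_le' hn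
    change m * (m + 3) ≤ (m + 1) * (m + 2)
    nlinarith
  calc mZ2 G ≤ ∏ _v : V, (n - 3) ^ (n - 3) :=
        prod_le_prod' fun v _ => pow_self_le_pow_self (Nat.le_sub_of_add_le (hdeg v))
    _ = (n - 3) ^ ((n - 3) * n) := by rw [prod_const, card_univ, hV, pow_mul]
    _ ≤ (n - 2) ^ ((n - 3) * n) := Nat.pow_le_pow_left (by omega) _
    _ ≤ (n - 2) ^ ((n - 2) * (n - 1)) := Nat.pow_le_pow_right (by omega) hexp
    _ = mZ2 (KnK n 0) := by rw [mZ2_KnK (by omega)]; simp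

lemma EdgeConnAtMost.nonempty_iso_KnK_or_mZ2_lt (hV : Fintype.card V = n) (hn : 3 ≤ n)
    (hk1 : 1 ≤ k) (hk2 : k < n) (h : EdgeConnAtMost G k) :
    Nonempty (G ≃g KnK n k) ∨ mZ2 G < mZ2 (KnK n k) := by
  have : Nonempty V := Fintype.card_pos_iff.1 (by omega)
  rcases h.exists_mdeg_le_or_forall_mdeg_add_three_le with ⟨v, hv⟩ | hdeg
  · obtain ⟨e, he⟩ := exists_equiv_map_le_KnK hV hk2 hv
    rcases he.eq_or_lt with heq | hlt
    · exact .inl (heq ▸ ⟨Iso.map e G⟩)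
    · exact .inr ((mZ2_congr (Iso.map e G)).trans_lt (mZ2_lt_mZ2_KnK hn hk1 hlt))
  · rw [hV] at hdeg
    exact .inr ((mZ2_le_mZ2_KnK_zero hV hn hdeg).trans_lt
      (mZ2_lt_mZ2_KnK hn hk1 (KnK_zero_lt_KnK (by omega) hk1)))

end Bound

theorem stmt3_general {V : Type*} [Fintype V] {n k : ℕ} (hV : Fintype.card V = n) (hn : 3 ≤ n)
    (hk1 : 1 ≤ k) (hk2 : k ≤ n - 1) (G : SimpleGraph V) (hκ' : EdgeConnAtMost G k) :
    mZ2 G ≤ k ^ k * (n - 1) ^ (k * (n - 1)) * (n - 2) ^ ((n - 2) * (n - k - 1)) ∧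
      (mZ2 G = k ^ k * (n - 1) ^ (k * (n - 1)) * (n - 2) ^ ((n - 2) * (n - k - 1)) ↔
        Nonempty (G ≃g KnK n k)) := by
  have hk : k < n := by omega
  rw [← mZ2_KnK hk]
  have hiso : Nonempty (G ≃g KnK n k) → mZ2 G = mZ2 (KnK n k) := fun ⟨φ⟩ => mZ2_congr φ
  rcases hκ'.nonempty_iso_KnK_or_mZ2_lt hV hn hk1 hk with h | h
  · exact ⟨(hiso h).le, fun _ => h, hiso⟩
  · exact ⟨h.le, fun heq => absurd heq h.ne, hiso⟩

theorem stmt3 (n k : ℕ) (hn : 3 ≤ n) (hk1 : 1 ≤ k) (hk2 : k ≤ n - 1)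
    (G : SimpleGraph (Fin n)) (hG : G.Connected) (hκ' : EdgeConnAtMost G k) :
    mZ2 G ≤ k ^ k * (n - 1) ^ (k * (n - 1)) * (n - 2) ^ ((n - 2) * (n - k - 1)) ∧
      (mZ2 G = k ^ k * (n - 1) ^ (k * (n - 1)) * (n - 2) ^ ((n - 2) * (n - k - 1)) ↔
        Nonempty (G ≃g KnK n k)) :=
  stmt3_general (Fintype.card_fin n) hn hk1 hk2 G hκ'
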